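/- arXiv:quant-ph/0406021 — 4 statements merged into one kernel-verified Lean document; each statement's English description precedes it below -/
import Mathlib

section
/- Let (V_j)_{j=1}^ℓ be a linearly independent family of d×d complex matrices and let Λ be the map on d×d complex matrices defined by Λ(x) = Σ_{j=1}^ℓ V_j† x V_j. Let (W_p)_{p=1}^{ℓ'} be any family of d×d complex matrices. Then Λ(x) = Σ_{p=1}^{ℓ'} W_p† x W_p holds for all d×d matrices x if and only if there exists an ℓ'×ℓ complex matrix μ = (μ_{pi}) with μ†μ = 1_ℓ (an isometric matrix) such that W_p = Σ_{i=1}^ℓ μ_{pi} V_i for all p. -/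
open Matrix

/-!
Flatten each Kraus family `(Vⱼ)` to a matrix `v` whose `j`-th row is `Vⱼ` read as a vector
indexed by `Fin d × Fin d`. The entries of `vᴴ * v` are those of the Choi matrix of
`x ↦ ∑ⱼ Vⱼᴴ x Vⱼ`, so two families define the same map exactly when `vᴴ * v = wᴴ * w`
(`kraus_eq_iff_gram_eq`), and `Wₚ = ∑ᵢ μₚᵢ Vᵢ` becomes `w = μ * v`.

If `w = μ * v` with `μᴴ * μ = 1`, the Gram matrices agree. Conversely, linear independence of
the `Vⱼ` gives a right inverse `r` of `v`, and `μ = w * r` works: `μᴴ * μ = (v * r)ᴴ * (v * r) = 1`,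
while `N = 1 - r * v` satisfies `(w * N)ᴴ * (w * N) = (v * N)ᴴ * (v * N) = 0` because `v * N = 0`,
so `w = w * r * v = μ * v`.
-/

/-- The matrix whose `j`-th row is `V j`, flattened to a vector indexed by pairs. -/
def krausFlatten {d n : ℕ} (V : Fin n → Matrix (Fin d) (Fin d) ℂ) :
    Matrix (Fin n) (Fin d × Fin d) ℂ :=
  Matrix.of fun j q => V j q.1 q.2

/-- The map with Kraus family `V` depends on `V` only through the Gram matrix of
`krausFlatten V`. -/
lemma kraus_apply {d n : ℕ} (V : Fin n → Matrix (Fin d) (Fin d) ℂ)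
    (x : Matrix (Fin d) (Fin d) ℂ) (b e : Fin d) :
    (∑ j, (V j)ᴴ * x * V j) b e =
      ∑ c, ∑ a, x a c * ((krausFlatten V)ᴴ * krausFlatten V) (a, b) (c, e) := by
  simp only [Matrix.sum_apply, Matrix.mul_apply, Matrix.conjTranspose_apply, krausFlatten,
    Matrix.of_apply, Finset.sum_mul, Finset.mul_sum]
  rw [Finset.sum_comm]
  refine Finset.sum_congr rfl fun c _ => ?_
  rw [Finset.sum_comm]
  refine Finset.sum_congr rfl fun a _ => Finset.sum_congr rfl fun j _ => ?_
  ring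

lemma kraus_eq_iff_gram_eq {d m n : ℕ} (V : Fin m → Matrix (Fin d) (Fin d) ℂ)
    (W : Fin n → Matrix (Fin d) (Fin d) ℂ) :
    (∀ x : Matrix (Fin d) (Fin d) ℂ,
        ∑ j, (V j)ᴴ * x * V j = ∑ p, (W p)ᴴ * x * W p) ↔
      (krausFlatten V)ᴴ * krausFlatten V = (krausFlatten W)ᴴ * krausFlatten W := by
  constructor
  · intro h
    ext ⟨a, b⟩ ⟨c, e⟩
    -- The matrix unit at `(a, c)` isolates a single entry of the Gram matrix.
    have := congrFun (congrFun (h (Matrix.single a c 1)) b) e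
    rw [kraus_apply, kraus_apply] at this
    simpa only [Matrix.single_apply, ite_and, ite_mul, one_mul, zero_mul, Finset.sum_ite_eq,
      Finset.mem_univ, if_true] using this
  · intro h x
    ext b e
    rw [kraus_apply, kraus_apply, h]

lemma krausFlatten_exists_rightInverse {d n : ℕ} {V : Fin n → Matrix (Fin d) (Fin d) ℂ}
    (hV : LinearIndependent ℂ V) :
    ∃ r : Matrix (Fin d × Fin d) (Fin n) ℂ, krausFlatten V * r = 1 := by
  have hrow : LinearIndependent ℂ (krausFlatten V).row :=
    hV.map' (LinearEquiv.curry ℂ ℂ (Fin d) (Fin d)).symm.toLinearMap (LinearEquiv.ker _)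
  have hinj : Function.Injective (krausFlatten V)ᵀ.mulVecLin := by
    intro y z hyz
    apply Matrix.vecMul_injective_iff.mpr hrow
    simpa [Matrix.mulVec_transpose] using hyz
  obtain ⟨g, hg⟩ := LinearMap.exists_leftInverse_of_injective _ (LinearMap.ker_eq_bot.mpr hinj)
  refine ⟨(LinearMap.toMatrix' g)ᵀ, ?_⟩
  have h := congrArg LinearMap.toMatrix' hg
  rw [LinearMap.toMatrix'_comp, LinearMap.toMatrix'_id, ← Matrix.toLin'_apply',
    LinearMap.toMatrix'_toLin'] at h
  simpa using congrArg Matrix.transpose h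

lemma krausFlatten_eq_mul_iff {d m n : ℕ} (V : Fin m → Matrix (Fin d) (Fin d) ℂ)
    (W : Fin n → Matrix (Fin d) (Fin d) ℂ) (μ : Matrix (Fin n) (Fin m) ℂ) :
    krausFlatten W = μ * krausFlatten V ↔ ∀ p, W p = ∑ i, μ p i • V i := by
  simp only [← Matrix.ext_iff, Prod.forall, Matrix.mul_apply, krausFlatten, Matrix.of_apply,
    Matrix.sum_apply, Matrix.smul_apply, smul_eq_mul]

/-- Given a Kraus representation `Λ(x) = Σⱼ Vⱼᴴ x Vⱼ` with `(Vⱼ)` linearly independent,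
a family `(Wₚ)` gives another Kraus representation of `Λ` if and only if the `Wₚ` are
obtained from the `Vᵢ` by an isometric matrix `μ` (i.e. `μᴴ μ = 1`). -/
theorem kraus_representation_iff_isometry
    {d ℓ ℓ' : ℕ} (V : Fin ℓ → Matrix (Fin d) (Fin d) ℂ)
    (hV : LinearIndependent ℂ V) (W : Fin ℓ' → Matrix (Fin d) (Fin d) ℂ) :
    (∀ x : Matrix (Fin d) (Fin d) ℂ,
        ∑ j, (V j)ᴴ * x * V j = ∑ p, (W p)ᴴ * x * W p) ↔
      ∃ μ : Matrix (Fin ℓ') (Fin ℓ) ℂ, μᴴ * μ = 1 ∧ ∀ p, W p = ∑ i, μ p i • V i := by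
  rw [kraus_eq_iff_gram_eq]
  simp only [← krausFlatten_eq_mul_iff]
  obtain ⟨r, hr⟩ := krausFlatten_exists_rightInverse hV
  generalize krausFlatten V = v at *
  generalize krausFlatten W = w at *
  constructor
  · intro h
    have gram {k : Type} [Fintype k] (N : Matrix (Fin d × Fin d) k ℂ) :
        (w * N)ᴴ * (w * N) = (v * N)ᴴ * (v * N) := by
      calc (w * N)ᴴ * (w * N) = Nᴴ * (wᴴ * w) * N := by
            simp only [Matrix.conjTranspose_mul, Matrix.mul_assoc]
        _ = (v * N)ᴴ * (v * N) := by
            rw [← h]; simp only [Matrix.conjTranspose_mul, Matrix.mul_assoc]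
    refine ⟨w * r, by rw [gram, hr]; simp, ?_⟩
    have hvN : v * (1 - r * v) = 0 := by
      rw [Matrix.mul_sub, ← Matrix.mul_assoc, hr]; simp
    have hwN : w * (1 - r * v) = 0 := by
      open scoped ComplexOrder in rw [← Matrix.conjTranspose_mul_self_eq_zero]
      rw [gram, hvN]; simp
    rw [Matrix.mul_sub, Matrix.mul_one, sub_eq_zero] at hwN
    rw [Matrix.mul_assoc]; exact hwN
  · rintro ⟨μ, hμ, rfl⟩
    rw [Matrix.conjTranspose_mul, Matrix.mul_assoc, ← Matrix.mul_assoc μᴴ, hμ, Matrix.one_mul]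
end

section
/- Let ρ₁ and ρ₂ be d×d density matrices. If ρ is an extreme point of C(ρ₁, ρ₂), then (rank ρ)² ≤ 2·d² (i.e., rank ρ ≤ √2·d). -/
/-!
The proof is a dimension count: when the rank of `ρ` is large, the marginal conditions are too few
to exclude a perturbation of `ρ` inside its own support.  Write `ρ = V * Vᴴ` with
`V` left invertible and with `r = rank ρ` columns (`exists_rank_factorization`).  The complex linear
map sending an `r × r` matrix `K` to the two partial traces of `V * K * Vᴴ` has a target of
dimension `2 d²`, so for `r² > 2 d²` it has a nonzero kernel element.  Since the kernel is stable
under conjugate transposition, it contains a nonzero Hermitian `H`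
(`exists_hermitian_of_mem`).  For small `t > 0` both `1 + t • H` and `1 - t • H` are positive
semidefinite (`exists_perturb`), so `ρ` is the midpoint of the two states `V * (1 ± t • H) * Vᴴ`,
which have the same marginals as `ρ`.  Extremality forces `V * H * Vᴴ = 0`, hence `H = 0`.
-/

open Matrix ComplexOrder Kronecker

noncomputable section

/-- Partial trace over the second factor. -/
def ptr2 (d : ℕ) (ρ : Matrix (Fin d × Fin d) (Fin d × Fin d) ℂ) : Matrix (Fin d) (Fin d) ℂ :=
  Matrix.of fun a b => ∑ i, ρ (a, i) (b, i)

/-- Partial trace over the first factor. -/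
def ptr1 (d : ℕ) (ρ : Matrix (Fin d × Fin d) (Fin d × Fin d) ℂ) : Matrix (Fin d) (Fin d) ℂ :=
  Matrix.of fun a b => ∑ i, ρ (i, a) (i, b)

/-- The convex set `C(ρ₁, ρ₂)` of bipartite states with marginals `ρ₁` and `ρ₂`. -/
def Cset (d : ℕ) (ρ₁ ρ₂ : Matrix (Fin d) (Fin d) ℂ) :
    Set (Matrix (Fin d × Fin d) (Fin d × Fin d) ℂ) :=
  {ρ | ρ.PosSemidef ∧ ρ.trace = 1 ∧ ptr2 d ρ = ρ₁ ∧ ptr1 d ρ = ρ₂}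

/-- An extreme point of a set `S` in a real vector space. -/
def IsExtremePt {E : Type*} [AddCommMonoid E] [Module ℝ E] (S : Set E) (x : E) : Prop :=
  x ∈ S ∧ ∀ a ∈ S, ∀ b ∈ S, ∀ t : ℝ, 0 < t → t < 1 → x = t • a + (1 - t) • b → a = b

/-- A rank factorization `ρ = V * Vᴴ`, where `V` has `rank ρ` columns and the left inverse `L`.
The columns of `V` are the eigenvectors of nonzero eigenvalue, scaled by the square roots of the
eigenvalues. -/
lemma exists_rank_factorization {n : Type} [Fintype n] [DecidableEq n] {ρ : Matrix n n ℂ}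
    (h : ρ.PosSemidef) :
    ∃ (V : Matrix n (Fin ρ.rank) ℂ) (L : Matrix (Fin ρ.rank) n ℂ),
      L * V = 1 ∧ ρ = V * Vᴴ := by
  have hH := h.isHermitian
  have hcard : Fintype.card {i // hH.eigenvalues i ≠ 0} = ρ.rank :=
    hH.rank_eq_card_non_zero_eigs.symm
  obtain ⟨e⟩ : Nonempty (Fin ρ.rank ≃ {i // hH.eigenvalues i ≠ 0}) :=
    ⟨(Fintype.equivFinOfCardEq hcard).symm⟩
  set U : Matrix n n ℂ := (hH.eigenvectorUnitary : Matrix n n ℂ) with hU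
  have hUU : Uᴴ * U = 1 := by
    have := Unitary.coe_star_mul_self hH.eigenvectorUnitary
    simpa [star_eq_conjTranspose] using this
  have hspec : ρ = U * diagonal (fun i => (hH.eigenvalues i : ℂ)) * Uᴴ := by
    have := hH.spectral_theorem
    rw [Unitary.conjStarAlgAut_apply] at this
    simpa [star_eq_conjTranspose, Function.comp_def] using this
  have hpos : ∀ i, 0 ≤ hH.eigenvalues i := h.eigenvalues_nonneg
  let s : n → ℂ := fun i => ((Real.sqrt (hH.eigenvalues i) : ℝ) : ℂ)
  have hss : ∀ i, s i * s i = hH.eigenvalues i := fun i => by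
    simp only [s]
    rw [← Complex.ofReal_mul, Real.mul_self_sqrt (hpos i)]
  have hs0 : ∀ i, hH.eigenvalues i ≠ 0 → s i ≠ 0 := fun i hi h0 => by
    apply hi
    have := hss i
    rw [h0] at this
    exact_mod_cast (by simpa using this.symm : (hH.eigenvalues i : ℂ) = 0)
  refine ⟨of fun a k => U a (e k) * s (e k), of fun k a => (s (e k))⁻¹ * star (U a (e k)), ?_, ?_⟩
  · ext k l
    have h1 : ∑ a, star (U a (e k)) * U a (e l) = if (e k : n) = e l then 1 else 0 := by
      have := congrFun (congrFun hUU (e k)) (e l)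
      simpa [mul_apply, one_apply] using this
    have h2 : ((of fun k a => (s (e k))⁻¹ * star (U a (e k)) : Matrix (Fin ρ.rank) n ℂ) *
        (of fun a k => U a (e k) * s (e k) : Matrix n (Fin ρ.rank) ℂ)) k l
        = (s (e k))⁻¹ * (∑ a, star (U a (e k)) * U a (e l)) * s (e l) := by
      simp only [mul_apply, of_apply, Finset.mul_sum, Finset.sum_mul]
      exact Finset.sum_congr rfl fun a _ => by ring
    rw [h2, h1, one_apply]
    by_cases hkl : k = l
    · subst hkl
      simp [hs0 _ (e k).2]
    · have : (e k : n) ≠ e l := fun h => hkl (e.injective (Subtype.ext h))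
      simp [hkl, this]
  · ext a b
    have h1 : ρ a b = ∑ i, U a i * hH.eigenvalues i * star (U b i) := by
      conv_lhs => rw [hspec]
      rw [mul_apply]
      simp only [mul_diagonal, conjTranspose_apply]
    rw [h1]
    simp only [mul_apply, conjTranspose_apply, of_apply]
    rw [Equiv.sum_comp e (fun i : {i // hH.eigenvalues i ≠ 0} =>
      U a i * s i * star (U b i * s i))]
    have hst : ∀ i, star (s i) = s i := fun i => Complex.conj_ofReal _
    have hterm : ∀ i, U a i * s i * star (U b i * s i)
        = U a i * (hH.eigenvalues i : ℂ) * star (U b i) := fun i => by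
      rw [star_mul, hst, ← hss i]
      ring
    simp only [hterm]
    -- Terms of zero eigenvalue vanish, so the sum over the subtype is the sum over all indices.
    rw [← Finset.sum_subtype (Finset.univ.filter fun i => hH.eigenvalues i ≠ 0) (by simp)
      (fun i => U a i * (hH.eigenvalues i : ℂ) * star (U b i))]
    refine (Finset.sum_filter_of_ne fun i _ hi => ?_).symm
    contrapose! hi
    simp [hi]

/-- A nonzero subspace of complex matrices that is stable under conjugate transposition contains a
nonzero Hermitian matrix. -/
lemma exists_hermitian_of_mem {n : Type} {S : Submodule ℂ (Matrix n n ℂ)}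
    (hS : ∀ K ∈ S, Kᴴ ∈ S) {K : Matrix n n ℂ} (hK : K ∈ S) (hK0 : K ≠ 0) :
    ∃ H ∈ S, H.IsHermitian ∧ H ≠ 0 := by
  by_cases h : K + Kᴴ = 0
  · refine ⟨Complex.I • K, S.smul_mem _ hK, ?_, by simpa using hK0⟩
    have : Kᴴ = -K := (neg_eq_of_add_eq_zero_right h).symm
    simp [IsHermitian, conjTranspose_smul, this]
  · exact ⟨K + Kᴴ, S.add_mem hK (hS K hK), isHermitian_add_transpose_self K, h⟩

/-- Any `t` with `t * |λ| ≤ 1` for all eigenvalues `λ` of `H` works. -/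
lemma exists_perturb {n : Type} [Fintype n] [DecidableEq n] {H : Matrix n n ℂ}
    (hH : H.IsHermitian) :
    ∃ t : ℝ, 0 < t ∧ (1 + (t : ℂ) • H).PosSemidef ∧ (1 - (t : ℂ) • H).PosSemidef := by
  set U : Matrix n n ℂ := (hH.eigenvectorUnitary : Matrix n n ℂ) with hU
  have hUU : U * Uᴴ = 1 := by
    have := Unitary.coe_mul_star_self hH.eigenvectorUnitary
    simpa [star_eq_conjTranspose] using this
  have hspec : H = U * diagonal (fun i => (hH.eigenvalues i : ℂ)) * Uᴴ := by
    have := hH.spectral_theorem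
    rw [Unitary.conjStarAlgAut_apply] at this
    simpa [star_eq_conjTranspose, Function.comp_def] using this
  have key : ∀ c : ℝ, (∀ i, 0 ≤ 1 + c * hH.eigenvalues i) → (1 + (c : ℂ) • H).PosSemidef := by
    intro c hc
    have : 1 + (c : ℂ) • H
        = U * diagonal (fun i => ((1 + c * hH.eigenvalues i : ℝ) : ℂ)) * Uᴴ := by
      have hd : diagonal (fun i => ((1 + c * hH.eigenvalues i : ℝ) : ℂ))
          = 1 + (c : ℂ) • diagonal (fun i => (hH.eigenvalues i : ℂ)) := by
        ext i j
        by_cases hij : i = j <;> simp [hij, diagonal, one_apply]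
      rw [hd, mul_add, add_mul, mul_one, hUU, Matrix.mul_smul, Matrix.smul_mul, ← hspec]
    rw [this]
    refine PosSemidef.mul_mul_conjTranspose_same (PosSemidef.diagonal fun i => ?_) U
    simpa only [Pi.zero_apply] using Complex.zero_le_real.mpr (hc i)
  have hsum : ∀ i, |hH.eigenvalues i| ≤ ∑ j, |hH.eigenvalues j| := fun i =>
    Finset.single_le_sum (f := fun j => |hH.eigenvalues j|) (fun j _ => abs_nonneg _)
      (Finset.mem_univ i)
  have hM : 0 ≤ ∑ j, |hH.eigenvalues j| := Finset.sum_nonneg fun j _ => abs_nonneg _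
  set M := ∑ j, |hH.eigenvalues j|
  have hb : ∀ i, |(1 + M)⁻¹ * hH.eigenvalues i| ≤ 1 := fun i => by
    rw [abs_mul, abs_of_pos (by positivity : 0 < (1 + M)⁻¹), inv_mul_le_iff₀ (by positivity)]
    linarith [hsum i]
  refine ⟨(1 + M)⁻¹, by positivity, key _ fun i => by linarith [(abs_le.mp (hb i)).1], ?_⟩
  have := key (-(1 + M)⁻¹) fun i => by linarith [(abs_le.mp (hb i)).2]
  simpa [sub_eq_add_neg] using this

/-- The pair of partial traces, as a linear map. -/
def ptrs (d : ℕ) : Matrix (Fin d × Fin d) (Fin d × Fin d) ℂ →ₗ[ℂ]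
    Matrix (Fin d) (Fin d) ℂ × Matrix (Fin d) (Fin d) ℂ where
  toFun X := (ptr2 d X, ptr1 d X)
  map_add' X Y := by
    ext <;> simp [ptr1, ptr2, Finset.sum_add_distrib]
  map_smul' c X := by
    ext <;> simp [ptr1, ptr2, Finset.mul_sum]

lemma trace_ptr2 {d : ℕ} (X : Matrix (Fin d × Fin d) (Fin d × Fin d) ℂ) :
    (ptr2 d X).trace = X.trace := by
  simp [ptr2, trace, Fintype.sum_prod_type]

lemma ptrs_conjTranspose {d : ℕ} {X : Matrix (Fin d × Fin d) (Fin d × Fin d) ℂ}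
    (h : ptrs d X = 0) : ptrs d Xᴴ = 0 := by
  have h1 : ptr2 d X = 0 := congrArg Prod.fst h
  have h2 : ptr1 d X = 0 := congrArg Prod.snd h
  have e1 : ptr2 d Xᴴ = (ptr2 d X)ᴴ := by ext; simp [ptr2]
  have e2 : ptr1 d Xᴴ = (ptr1 d X)ᴴ := by ext; simp [ptr1]
  exact Prod.ext (by change ptr2 d Xᴴ = 0; simp [e1, h1]) (by change ptr1 d Xᴴ = 0; simp [e2, h2])

/-- The trace condition is automatic, since the trace is determined by either partial trace. -/
lemma mem_Cset_of_ptrs_eq {d : ℕ} {ρ₁ ρ₂ : Matrix (Fin d) (Fin d) ℂ}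
    {ρ σ : Matrix (Fin d × Fin d) (Fin d × Fin d) ℂ} (hρ : ρ ∈ Cset d ρ₁ ρ₂)
    (hσ : σ.PosSemidef) (h : ptrs d σ = ptrs d ρ) : σ ∈ Cset d ρ₁ ρ₂ := by
  have h1 : ptr2 d σ = ptr2 d ρ := congrArg Prod.fst h
  have h2 : ptr1 d σ = ptr1 d ρ := congrArg Prod.snd h
  obtain ⟨-, ht, e1, e2⟩ := hρ
  exact ⟨hσ, by rw [← trace_ptr2, h1, trace_ptr2, ht], h1.trans e1, h2.trans e2⟩

/-- Any extreme point `ρ` of `C(ρ₁, ρ₂)` satisfies `(rank ρ)² ≤ 2 d²`. -/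
theorem rank_sq_le_of_extreme {d : ℕ} (ρ₁ ρ₂ : Matrix (Fin d) (Fin d) ℂ)
    (h₁ : ρ₁.PosSemidef) (h₁t : ρ₁.trace = 1)
    (h₂ : ρ₂.PosSemidef) (h₂t : ρ₂.trace = 1)
    (ρ : Matrix (Fin d × Fin d) (Fin d × Fin d) ℂ)
    (hext : IsExtremePt (Cset d ρ₁ ρ₂) ρ) :
    ρ.rank ^ 2 ≤ 2 * d ^ 2 := by
  by_contra! hlt
  obtain ⟨hmem, hext⟩ := hext
  obtain ⟨V, L, hLV, hρ⟩ := exists_rank_factorization hmem.1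
  have hVL : Vᴴ * Lᴴ = 1 := by rw [← conjTranspose_mul, hLV, conjTranspose_one]
  let c : Matrix (Fin ρ.rank) (Fin ρ.rank) ℂ →ₗ[ℂ] Matrix (Fin d × Fin d) (Fin d × Fin d) ℂ :=
    { toFun := fun K => V * K * Vᴴ
      map_add' := fun K K' => by rw [Matrix.mul_add, Matrix.add_mul]
      map_smul' := fun a K => by rw [Matrix.mul_smul, Matrix.smul_mul, RingHom.id_apply] }
  have hker : LinearMap.ker (ptrs d ∘ₗ c) ≠ ⊥ := by
    apply LinearMap.ker_ne_bot_of_finrank_lt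
    simp only [Module.finrank_prod, Module.finrank_matrix, Fintype.card_fin, Module.finrank_self]
    nlinarith
  obtain ⟨K, hK, hK0⟩ := Submodule.exists_mem_ne_zero_of_ne_bot hker
  obtain ⟨H, hHker, hH, hH0⟩ := exists_hermitian_of_mem
    (fun K hK => by
      have := ptrs_conjTranspose (LinearMap.mem_ker.mp hK)
      rw [LinearMap.mem_ker]
      simpa [c, conjTranspose_mul, Matrix.mul_assoc] using this) hK hK0
  obtain ⟨t, ht, hp, hm⟩ := exists_perturb hH
  have hc1 : c 1 = ρ := by simp [c, ← hρ]
  have hcH : ptrs d (c H) = 0 := hHker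
  have ha : c (1 + (t : ℂ) • H) ∈ Cset d ρ₁ ρ₂ :=
    mem_Cset_of_ptrs_eq hmem (hp.mul_mul_conjTranspose_same V)
      (by simp only [map_add, map_smul, hc1, hcH, smul_zero, add_zero])
  have hb : c (1 - (t : ℂ) • H) ∈ Cset d ρ₁ ρ₂ :=
    mem_Cset_of_ptrs_eq hmem (hm.mul_mul_conjTranspose_same V)
      (by simp only [map_sub, map_smul, hc1, hcH, smul_zero, sub_zero])
  have hab := hext _ ha _ hb (1 / 2) (by norm_num) (by norm_num) (by
    simp only [map_add, map_sub, map_smul, hc1]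
    module)
  have hz : c H = 0 := by
    simp only [map_add, map_sub, map_smul] at hab
    have h2 : (2 * t : ℂ) • c H = 0 := by
      have h3 := sub_eq_zero.mpr hab
      rw [← h3]
      module
    exact (smul_eq_zero.mp h2).resolve_left (by simp [ht.ne'])
  apply hH0
  calc H = (L * V) * H * (Vᴴ * Lᴴ) := by rw [hLV, hVL, one_mul, mul_one]
    _ = L * c H * Lᴴ := by simp only [c, LinearMap.coe_mk, AddHom.coe_mk, Matrix.mul_assoc]
    _ = 0 := by rw [hz]; simp
end
end

section
/- Let d ≥ 2 and let ρ₁ and ρ₂ be d×d density matrices. Then every extreme point ρ of C(ρ₁, ρ₂) is a singular matrix, i.e., ρ is not invertible (equivalently det ρ = 0, equivalently rank ρ < d²). -/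
/-! A nonsingular state `ρ` is positive definite, so it dominates `ε • 1` for some `ε > 0`
(`posDef_exists_sub_smul_one`). Put `s = e₀ - e₁`, possible as `d ≥ 2`: a vector on `Fin d` with zero
sum and entries in `[-1, 1]`. The real diagonal matrix `V` with entries `s a * s b` is nonzero, both
of its partial traces vanish, and `-1 ≤ V ≤ 1`. Hence `ρ ± ε V` are two different elements of
`C(ρ₁, ρ₂)` with midpoint `ρ` (`add_diagonal_mem_Cset`), and `ρ` is not extreme. -/

open Matrix ComplexOrder Kronecker

noncomputable section

/-- A positive definite matrix dominates a positive multiple of the identity: take the multiple to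
be its least eigenvalue. -/
lemma posDef_exists_sub_smul_one {n : Type*} [Fintype n] [DecidableEq n]
    {A : Matrix n n ℂ} (hA : A.PosDef) :
    ∃ ε : ℝ, 0 < ε ∧ (A - (ε : ℂ) • (1 : Matrix n n ℂ)).PosSemidef := by
  obtain ⟨ε, hε, hle⟩ : ∃ ε : ℝ, 0 < ε ∧ ∀ i, ε ≤ hA.isHermitian.eigenvalues i := by
    cases isEmpty_or_nonempty n
    · exact ⟨1, one_pos, fun i => isEmptyElim i⟩
    · obtain ⟨i, hi⟩ := Finite.exists_min hA.isHermitian.eigenvalues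
      exact ⟨_, hA.eigenvalues_pos i, hi⟩
  refine ⟨ε, hε, ?_⟩
  set U := hA.isHermitian.eigenvectorUnitary
  have hU : (U : Matrix n n ℂ) * star (U : Matrix n n ℂ) = 1 := Unitary.coe_mul_star_self U
  have key : A - (ε : ℂ) • (1 : Matrix n n ℂ) = (U : Matrix n n ℂ) *
      diagonal (fun i => ((hA.isHermitian.eigenvalues i - ε : ℝ) : ℂ)) *
        (U : Matrix n n ℂ)ᴴ := by
    have hD : diagonal (fun i => ((hA.isHermitian.eigenvalues i - ε : ℝ) : ℂ)) =
        diagonal (RCLike.ofReal ∘ hA.isHermitian.eigenvalues) - (ε : ℂ) • (1 : Matrix n n ℂ) := by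
      ext i j
      by_cases h : i = j <;> simp [h]
    have hs := hA.isHermitian.spectral_theorem
    rw [Unitary.conjStarAlgAut_apply] at hs
    rw [hD, mul_sub, sub_mul, ← star_eq_conjTranspose, mul_smul_comm, smul_mul_assoc, mul_one, hU,
      ← hs]
  rw [key]
  refine PosSemidef.mul_mul_conjTranspose_same (PosSemidef.diagonal fun i => ?_) _
  exact Complex.zero_le_real.2 (sub_nonneg.2 (hle i))

/-- Adding the real diagonal matrix with entries `c * (s a * s b)`, where `|s| ≤ 1`, `∑ s = 0` and
`|c| ≤ ε`, keeps a state dominating `ε • 1` inside `C(ρ₁, ρ₂)`. -/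
lemma add_diagonal_mem_Cset {d : ℕ} {ρ₁ ρ₂ : Matrix (Fin d) (Fin d) ℂ}
    {ρ : Matrix (Fin d × Fin d) (Fin d × Fin d) ℂ} (hρ : ρ ∈ Cset d ρ₁ ρ₂) {ε : ℝ}
    (hε : (ρ - (ε : ℂ) • (1 : Matrix (Fin d × Fin d) (Fin d × Fin d) ℂ)).PosSemidef)
    {s : Fin d → ℝ} (hs : ∑ i, s i = 0) (hs1 : ∀ i, |s i| ≤ 1) {c : ℝ} (hc : |c| ≤ ε) :
    ρ + diagonal (fun p : Fin d × Fin d => ((c * (s p.1 * s p.2) : ℝ) : ℂ)) ∈ Cset d ρ₁ ρ₂ := by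
  obtain ⟨-, htr, h2, h1⟩ := hρ
  have hsC : ∑ i, (s i : ℂ) = 0 := by exact_mod_cast hs
  refine ⟨?_, ?_, ?_, ?_⟩
  · have hD : (diagonal (fun p : Fin d × Fin d =>
        ((ε + c * (s p.1 * s p.2) : ℝ) : ℂ))).PosSemidef := by
      refine PosSemidef.diagonal fun p => ?_
      have hb : |c * (s p.1 * s p.2)| ≤ ε := by
        rw [abs_mul, abs_mul]
        have := mul_le_one₀ (hs1 p.1) (abs_nonneg _) (hs1 p.2)
        exact (mul_le_of_le_one_right (abs_nonneg c) this).trans hc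
      have : 0 ≤ ε + c * (s p.1 * s p.2) := by linarith [(abs_le.1 hb).1]
      exact Complex.zero_le_real.2 this
    convert hε.add hD using 1
    ext p q
    by_cases h : p = q
    · simp [h]
      ring
    · simp [h]
  · rw [trace_add, htr, trace_diagonal, Fintype.sum_prod_type]
    push_cast
    simp_rw [← Finset.mul_sum, hsC]
    simp
  · rw [← h2]
    ext a b
    by_cases h : a = b
    · subst h
      simp [ptr2, Finset.sum_add_distrib, ← Finset.mul_sum, hsC]
    · simp [ptr2, h]
  · rw [← h1]
    ext a b
    by_cases h : a = b
    · subst h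
      simp [ptr1, Finset.sum_add_distrib, ← Finset.mul_sum, ← Finset.sum_mul, hsC]
    · simp [ptr1, h]

/-- For `d ≥ 2`, every extreme point of `C(ρ₁, ρ₂)` is a singular matrix. -/
theorem extreme_Cset_singular {d : ℕ} (hd : 2 ≤ d) (ρ₁ ρ₂ : Matrix (Fin d) (Fin d) ℂ)
    (h₁ : ρ₁.PosSemidef) (h₁t : ρ₁.trace = 1)
    (h₂ : ρ₂.PosSemidef) (h₂t : ρ₂.trace = 1)
    (ρ : Matrix (Fin d × Fin d) (Fin d × Fin d) ℂ)
    (hext : IsExtremePt (Cset d ρ₁ ρ₂) ρ) :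
    ρ.det = 0 := by
  by_contra hdet
  obtain ⟨hmem, hex⟩ := hext
  have hpd : ρ.PosDef := hmem.1.posDef_iff_det_ne_zero.2 hdet
  obtain ⟨ε, hε, hsub⟩ := posDef_exists_sub_smul_one hpd
  let i₀ : Fin d := ⟨0, by omega⟩
  let i₁ : Fin d := ⟨1, by omega⟩
  have hne : i₀ ≠ i₁ := by simp [i₀, i₁]
  let s : Fin d → ℝ := fun i => (if i = i₀ then 1 else 0) - (if i = i₁ then 1 else 0)
  have hs : ∑ i, s i = 0 := by simp [s]
  have hs1 : ∀ i, |s i| ≤ 1 := by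
    intro i
    simp only [s]
    split_ifs <;> simp
  have hs0 : s i₀ = 1 := by simp [s, hne]
  have ha := add_diagonal_mem_Cset hmem hsub hs hs1 (c := ε) (abs_of_pos hε).le
  have hb := add_diagonal_mem_Cset hmem hsub hs hs1 (c := -ε) (by rw [abs_neg, abs_of_pos hε])
  have h := hex _ ha _ hb (1 / 2) (by norm_num) (by norm_num) (by
    ext p q
    by_cases h : p = q
    · simp [h]
      ring
    · simp [h]
      ring)
  -- the two perturbations differ at the diagonal entry `((0, 0), (0, 0))`, by `2 * ε`
  have h0 := congrFun (congrFun h (i₀, i₀)) (i₀, i₀)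
  simp [hs0] at h0
  have h0' : ε = -ε := by exact_mod_cast h0
  linarith
end
end

section
/- Let V₁ and V₂ be 2×2 complex matrices satisfying V₁†V₁ + V₂†V₂ = 1₂ and V₁V₁† + V₂V₂† = 1₂. Then the 4-tuples (V_i† V_j)_{(i,j)∈{1,2}²} and (V_j V_i†)_{(i,j)∈{1,2}²} are not jointly linearly independent; that is, the family of pairs ((V_i† V_j, V_j V_i†))_{(i,j)} is linearly dependent in the product space of pairs of 2×2 matrices. -/
/-!
Write `A = V 0`, `B = V 1`, `P = AᴴA`, `Q = AAᴴ`. Then `BᴴB = 1 - P` and `BBᴴ = 1 - Q`, so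
`AP = QA` and `BP = QB`; hence `AᴴB` commutes with `P` and `BAᴴ` commutes with `Q`.

A 2×2 matrix `X` commuting with `P` satisfies `d X = a + b P`, where `d = 2 tr P² - (tr P)²` is the
discriminant of `P` and `a`, `b` are polynomials in `tr X`, `tr P`, `tr P²`, `tr XP`
(`disc_smul_eq_of_commute`). By cyclicity, all these traces are the same for the pair `(AᴴB, P)` as
for `(BAᴴ, Q)`. Since `(1, 1)` is the sum of the diagonal pairs, this reads
`d (AᴴB, BAᴴ) = a ((P, Q) + (BᴴB, BBᴴ)) + b (P, Q)`, a nontrivial relation when `d ≠ 0`.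

If `d = 0`, the Hermitian matrices `P`, `Q` are the same scalar (`eq_smul_one_of_disc_eq_zero`), and
so are `BᴴB`, `BBᴴ`; then the two diagonal pairs alone are dependent.
-/

open Matrix

/-- The discriminant `(λ₁ - λ₂)²` of the characteristic polynomial of a 2×2 matrix with
eigenvalues `λ₁`, `λ₂`, written through traces. -/
noncomputable def disc (P : Matrix (Fin 2) (Fin 2) ℂ) : ℂ :=
  2 * (P * P).trace - P.trace ^ 2

/-- The commutant of a non-scalar 2×2 matrix `P` is spanned by `1` and `P`. The coefficients come
from solving `X = α + β P` after taking traces against `1` and `P`, with the determinant of that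
system cleared. -/
lemma disc_smul_eq_of_commute (X P : Matrix (Fin 2) (Fin 2) ℂ) (h : X * P = P * X) :
    disc P • X = (X.trace * (P * P).trace - P.trace * (X * P).trace) •
        (1 : Matrix (Fin 2) (Fin 2) ℂ)
      + (2 * (X * P).trace - X.trace * P.trace) • P := by
  have c1 := congrFun (congrFun h 0) 0
  have c2 := congrFun (congrFun h 0) 1
  have c3 := congrFun (congrFun h 1) 0
  simp only [Matrix.mul_apply, Fin.sum_univ_two] at c1 c2 c3
  ext i j
  fin_cases i <;> fin_cases j <;>
    simp [disc, Matrix.trace, Matrix.mul_apply, Fin.sum_univ_two] <;> grind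

lemma eq_smul_one_of_disc_eq_zero (P : Matrix (Fin 2) (Fin 2) ℂ) (hP : P.IsHermitian)
    (h : disc P = 0) : P = (P.trace / 2) • (1 : Matrix (Fin 2) (Fin 2) ℂ) := by
  have e0 := Complex.conj_eq_iff_im.1 (hP.apply 0 0)
  have e1 := Complex.conj_eq_iff_im.1 (hP.apply 1 1)
  have e2 : star (P 0 1) = P 1 0 := hP.apply 1 0
  have r2 : (P 1 0).re = (P 0 1).re := by simp [← e2]
  have i2 : (P 1 0).im = -(P 0 1).im := by simp [← e2]
  have hre := congrArg Complex.re h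
  simp [disc, Matrix.trace, Matrix.mul_apply, Fin.sum_univ_two, pow_two, e0, e1, r2, i2] at hre
  -- The discriminant is the sum of squares `(P₀₀ - P₁₁)² + 4 |P₀₁|²`.
  have hs : ((P 0 0).re - (P 1 1).re) ^ 2 + 4 * (P 0 1).re ^ 2 + 4 * (P 0 1).im ^ 2 = 0 := by
    linear_combination hre
  have a0 : (P 0 0).re - (P 1 1).re = 0 := by
    apply pow_eq_zero_iff (two_ne_zero) |>.1; nlinarith [sq_nonneg ((P 0 0).re - (P 1 1).re), sq_nonneg (P 0 1).re, sq_nonneg (P 0 1).im]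
  have a1 : (P 0 1).re = 0 := by
    apply pow_eq_zero_iff (two_ne_zero) |>.1; nlinarith [sq_nonneg ((P 0 0).re - (P 1 1).re), sq_nonneg (P 0 1).re, sq_nonneg (P 0 1).im]
  have a2 : (P 0 1).im = 0 := by
    apply pow_eq_zero_iff (two_ne_zero) |>.1; nlinarith [sq_nonneg ((P 0 0).re - (P 1 1).re), sq_nonneg (P 0 1).re, sq_nonneg (P 0 1).im]
  have z01 : P 0 1 = 0 := Complex.ext a1 a2
  have z10 : P 1 0 = 0 := by rw [← e2, z01, star_zero]
  have z : P 0 0 = P 1 1 := Complex.ext (by linarith) (by rw [e0, e1])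
  ext i j
  fin_cases i <;> fin_cases j <;> simp [Matrix.trace, Fin.sum_univ_two, z01, z10, z]

/-- If `V₁, V₂` are 2×2 complex matrices with `V₁ᴴV₁ + V₂ᴴV₂ = 1` and
`V₁V₁ᴴ + V₂V₂ᴴ = 1`, then the families `(Vᵢᴴ Vⱼ)` and `(Vⱼ Vᵢᴴ)` are not jointly
linearly independent: the family of pairs `((Vᵢᴴ Vⱼ, Vⱼ Vᵢᴴ))` is linearly dependent. -/
theorem two_dim_kraus_pairs_not_jointly_independent
    (V : Fin 2 → Matrix (Fin 2) (Fin 2) ℂ)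
    (h₁ : (V 0)ᴴ * V 0 + (V 1)ᴴ * V 1 = 1)
    (h₂ : V 0 * (V 0)ᴴ + V 1 * (V 1)ᴴ = 1) :
    ¬ LinearIndependent ℂ
        (fun p : Fin 2 × Fin 2 => ((V p.1)ᴴ * V p.2, V p.2 * (V p.1)ᴴ)) := by
  intro hli
  rw [Fintype.linearIndependent_iff] at hli
  -- Only the pairs indexed by `(0, 0)`, `(0, 1)`, `(1, 1)` enter the relation.
  have key : ∀ x y z : ℂ,
      x • ((V 0)ᴴ * V 0) + y • ((V 0)ᴴ * V 1) + z • ((V 1)ᴴ * V 1) = 0 →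
      x • (V 0 * (V 0)ᴴ) + y • (V 1 * (V 0)ᴴ) + z • (V 1 * (V 1)ᴴ) = 0 →
      x = 0 ∧ y = 0 ∧ z = 0 := by
    intro x y z e f
    have := hli (fun p => !![x, y; 0, z] p.1 p.2) (by
      rw [Fintype.sum_prod_type]
      simp only [Fin.sum_univ_two]
      ext1
      · simpa [← add_assoc] using e
      · simpa [← add_assoc] using f)
    exact ⟨by simpa using this (0, 0), by simpa using this (0, 1), by simpa using this (1, 1)⟩
  clear hli
  generalize V 0 = A at *
  generalize V 1 = B at *
  have hB : Bᴴ * B = 1 - Aᴴ * A := eq_sub_of_add_eq' h₁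
  have hB' : B * Bᴴ = 1 - A * Aᴴ := eq_sub_of_add_eq' h₂
  have hBP : B * (Aᴴ * A) = (A * Aᴴ) * B := by
    have : B * (Bᴴ * B) = (B * Bᴴ) * B := (Matrix.mul_assoc _ _ _).symm
    rw [hB, hB', mul_sub, sub_mul, mul_one, one_mul] at this
    exact sub_right_injective this
  have c1 : (Aᴴ * B) * (Aᴴ * A) = (Aᴴ * A) * (Aᴴ * B) := by
    rw [mul_assoc, hBP]; simp only [mul_assoc]
  have c2 : (B * Aᴴ) * (A * Aᴴ) = (A * Aᴴ) * (B * Aᴴ) := by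
    rw [← mul_assoc (A * Aᴴ), ← hBP]; simp only [mul_assoc]
  have t1 : (A * Aᴴ).trace = (Aᴴ * A).trace := trace_mul_comm _ _
  have t2 : ((A * Aᴴ) * (A * Aᴴ)).trace = ((Aᴴ * A) * (Aᴴ * A)).trace := by
    rw [mul_assoc, trace_mul_comm]; simp only [mul_assoc]
  have t3 : (B * Aᴴ).trace = (Aᴴ * B).trace := trace_mul_comm _ _
  have t4 : ((B * Aᴴ) * (A * Aᴴ)).trace = ((Aᴴ * B) * (Aᴴ * A)).trace := by
    rw [← mul_assoc (B * Aᴴ), trace_mul_comm]; simp only [mul_assoc]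
  have td : disc (A * Aᴴ) = disc (Aᴴ * A) := by rw [disc, disc, t1, t2]
  by_cases hd : disc (Aᴴ * A) = 0
  · have p := eq_smul_one_of_disc_eq_zero _ (isHermitian_conjTranspose_mul_self A) hd
    have q := eq_smul_one_of_disc_eq_zero _ (isHermitian_mul_conjTranspose_self A) (td.trans hd)
    rw [t1] at q
    generalize (Aᴴ * A).trace / 2 = r at p q
    have := key (1 - r) 0 (-r) (by rw [hB, p]; module) (by rw [hB', q]; module)
    -- The coefficients `1 - r` and `-r` cannot both vanish.
    exact one_ne_zero (α := ℂ) (by linear_combination this.1 - this.2.2)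
  · have e := disc_smul_eq_of_commute _ _ c1
    have f := disc_smul_eq_of_commute _ _ c2
    rw [t1, t2, t3, t4, td] at f
    generalize (Aᴴ * B).trace * ((Aᴴ * A) * (Aᴴ * A)).trace
      - (Aᴴ * A).trace * ((Aᴴ * B) * (Aᴴ * A)).trace = a at e f
    generalize 2 * ((Aᴴ * B) * (Aᴴ * A)).trace - (Aᴴ * B).trace * (Aᴴ * A).trace = b at e f
    exact hd (key (-a - b) (disc (Aᴴ * A)) (-a) (by rw [e, hB]; module)
      (by rw [f, hB']; module)).2.1
end
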